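/- Let Δ be a simplicial complex on the vertex set [n] and let v be a vertex of Δ. Then v is a shedding vertex of Δ if and only if the set of associated primes of the ideal I_Δ + (x_v) equals the set of those associated primes 𝔭 of I_Δ with x_v ∈ 𝔭. -/

import Mathlib

/-!
The Stanley-Reisner ideal `I_Δ` is the intersection of the primes `P_{F̄}` over the facets `F`, and
`P_{F̄} ⊆ P_{Ḡ}` exactly when `G ⊆ F`. Facets being pairwise incomparable, this is a minimal primary
decomposition, so `ass(I_Δ) = {P_{F̄} | F a facet of Δ}`. Moreover `I_Δ + (x_v)` is the
Stanley-Reisner ideal of `del_Δ(v)`, and `x_v ∈ P_{F̄}` exactly when `v ∉ F`. Since `F ↦ P_{F̄}` is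
injective, equality of the two sets of primes says that the facets of `del_Δ(v)` are the facets of
`Δ` avoiding `v`; every facet of `Δ` avoiding `v` is a facet of `del_Δ(v)`, so the content is the
other inclusion, which is the shedding condition.
-/

open MvPolynomial

namespace Paper

/-- An (abstract) simplicial complex: a nonempty, downward closed collection of
finite subsets of the vertex set. -/
def IsComplex {n : ℕ} (Δ : Set (Finset (Fin n))) : Prop :=
  Δ.Nonempty ∧ ∀ F ∈ Δ, ∀ G, G ⊆ F → G ∈ Δ

/-- The deletion `del_Δ(v)`. -/
def delC {n : ℕ} (Δ : Set (Finset (Fin n))) (v : Fin n) : Set (Finset (Fin n)) :=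
  {G ∈ Δ | v ∉ G}

/-- The link `link_Δ(v)`. -/
def linkC {n : ℕ} (Δ : Set (Finset (Fin n))) (v : Fin n) : Set (Finset (Fin n)) :=
  {G | G ∈ Δ ∧ v ∉ G ∧ insert v G ∈ Δ}

/-- A facet is a maximal face. -/
def IsFacet {n : ℕ} (Δ : Set (Finset (Fin n))) (F : Finset (Fin n)) : Prop :=
  F ∈ Δ ∧ ∀ G ∈ Δ, F ⊆ G → G = F

/-- A vertex `v` of `Δ` is a shedding vertex if every facet of `del_Δ(v)` is a facet
of `Δ`. -/
def IsSheddingVertex {n : ℕ} (Δ : Set (Finset (Fin n))) (v : Fin n) : Prop :=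
  {v} ∈ Δ ∧ ∀ F, IsFacet (delC Δ v) F → IsFacet Δ F

/-- `Δ` is a simplex: it has a unique maximal face containing all faces. -/
def IsSimplexC {n : ℕ} (Δ : Set (Finset (Fin n))) : Prop :=
  ∃ F ∈ Δ, ∀ G ∈ Δ, G ⊆ F

/-- Vertex decomposability, defined recursively. -/
inductive IsVertexDecomposable {n : ℕ} : Set (Finset (Fin n)) → Prop
  | simplex {Δ : Set (Finset (Fin n))} (h : IsComplex Δ) (hs : IsSimplexC Δ) :
      IsVertexDecomposable Δ
  | step {Δ : Set (Finset (Fin n))} (h : IsComplex Δ) (v : Fin n)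
      (hv : IsSheddingVertex Δ v)
      (h1 : IsVertexDecomposable (linkC Δ v)) (h2 : IsVertexDecomposable (delC Δ v)) :
      IsVertexDecomposable Δ

/-- The Stanley-Reisner ideal of `Δ`, generated by the squarefree monomials
`x_F = ∏_{i ∈ F} x_i` with `F ∉ Δ`. -/
noncomputable def SRIdeal (n : ℕ) (K : Type) [Field K] (Δ : Set (Finset (Fin n))) :
    Ideal (MvPolynomial (Fin n) K) :=
  Ideal.span {m | ∃ F : Finset (Fin n), F ∉ Δ ∧ m = ∏ i ∈ F, X i}

/-- `P_{F̄}`, the prime ideal generated by the variables `x_i` with `i ∉ F`. -/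
noncomputable def facePrime (n : ℕ) (K : Type) [Field K] (F : Finset (Fin n)) :
    Ideal (MvPolynomial (Fin n) K) :=
  Ideal.span ((fun i => (X i : MvPolynomial (Fin n) K)) '' {i | i ∉ F})

section AssociatedPrimes

theorem isMinimalPrimaryDecomposition_of_isAntichain {R : Type*} [CommSemiring R]
    {s : Finset (Ideal R)}
    (hprime : ∀ P ∈ s, P.IsPrime) (hanti : IsAntichain (· ≤ ·) (s : Set (Ideal R))) :
    Submodule.IsMinimalPrimaryDecomposition (s.inf id) s where
  inf_eq := rfl
  primary P hP := (hprime P hP).isPrimary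
  distinct P hP Q hQ hPQ := by
    simpa only [Function.onFun, Submodule.colon_univ, (hprime P hP).radical,
      (hprime Q hQ).radical] using hPQ
  minimal P hP hle := by
    obtain ⟨Q, hQ, hQP⟩ := (hprime P hP).inf_le'.1 hle
    exact hanti (Finset.mem_of_mem_erase hQ) hP (Finset.ne_of_mem_erase hQ) hQP

variable {R M : Type*} [CommRing R] [AddCommGroup M] [Module R M]

theorem bot_colon_singleton_mk (N : Submodule R M) (x : M) :
    (⊥ : Submodule R (M ⧸ N)).colon {Submodule.Quotient.mk x} = N.colon {x} := by
  ext r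
  rw [Submodule.mem_colon_singleton, Submodule.mem_colon_singleton, Submodule.mem_bot,
    ← Submodule.Quotient.mk_smul, Submodule.Quotient.mk_eq_zero]

theorem associatedPrimes_quotient (N : Submodule R M) :
    associatedPrimes R (M ⧸ N) = N.associatedPrimes := by
  ext P
  rw [AssociatedPrimes.mem_iff, IsAssociatedPrime, Submodule.isAssociatedPrime_def,
    Submodule.AssociatePrimes.mem_iff, Submodule.isAssociatedPrime_def,
    (Submodule.Quotient.mk_surjective N).exists]
  simp only [bot_colon_singleton_mk]

theorem associatedPrimes_quotient_sInf {S : Set (Ideal R)} (hfin : S.Finite)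
    (hprime : ∀ P ∈ S, P.IsPrime) (hanti : IsAntichain (· ≤ ·) S) :
    associatedPrimes R (R ⧸ sInf S) = S := by
  lift S to Finset (Ideal R) using hfin
  have hdecomp := isMinimalPrimaryDecomposition_of_isAntichain hprime hanti
  rw [← Finset.inf_id_eq_sInf, associatedPrimes_quotient,
    ← hdecomp.image_radical_eq_associated_primes]
  refine (Set.image_congr fun P hP => ?_).trans (Set.image_id _)
  rw [Submodule.colon_univ, (hprime P hP).radical, id]

end AssociatedPrimes

section MonomialIdeals

variable {σ R : Type*}

theorem ker_aeval_indicator_X [CommRing R] (s : Set σ) :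
    RingHom.ker (aeval (sᶜ.indicator X) : MvPolynomial σ R →ₐ[R] MvPolynomial σ R) =
      Ideal.span (X '' s) := by
  set φ : MvPolynomial σ R →ₐ[R] MvPolynomial σ R := aeval (sᶜ.indicator X)
  set I : Ideal (MvPolynomial σ R) := Ideal.span (X '' s)
  apply le_antisymm
  · have hφ : (Ideal.Quotient.mkₐ R I).comp φ = Ideal.Quotient.mkₐ R I := by
      ext i
      by_cases hi : i ∈ s
      · have hXi : X i ∈ I := Ideal.subset_span (Set.mem_image_of_mem X hi)
        simp [φ, hi, Ideal.Quotient.eq_zero_iff_mem.2 hXi]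
      · simp [φ, hi]
    intro p hp
    rw [← Ideal.Quotient.eq_zero_iff_mem, ← Ideal.Quotient.mkₐ_eq_mk R, ← hφ, AlgHom.comp_apply,
      RingHom.mem_ker.1 hp, map_zero]
  · rw [Ideal.span_le]
    rintro _ ⟨i, hi, rfl⟩
    simp [φ, hi]

theorem isPrime_span_X_image [CommRing R] [IsDomain R] (s : Set σ) :
    (Ideal.span (X '' s : Set (MvPolynomial σ R))).IsPrime := by
  rw [← ker_aeval_indicator_X]
  exact RingHom.ker_isPrime _

theorem sum_single_one_le_iff (F : Finset σ) (m : σ →₀ ℕ) :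
    ∑ i ∈ F, Finsupp.single i 1 ≤ m ↔ F ⊆ m.support := by
  classical
  simp only [Finsupp.le_def, Finsupp.finsetSum_apply, Finsupp.single_apply, Finset.sum_ite_eq',
    Finset.subset_iff, Finsupp.mem_support_iff, ← Nat.one_le_iff_ne_zero]
  refine forall_congr' fun i => ?_
  split_ifs with hi <;> simp [hi]

theorem mem_span_prod_X_image [CommSemiring R] {𝓕 : Set (Finset σ)} {p : MvPolynomial σ R} :
    p ∈ Ideal.span ((fun F : Finset σ => ∏ i ∈ F, X i) '' 𝓕) ↔
      ∀ m ∈ p.support, ∃ F ∈ 𝓕, F ⊆ m.support := by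
  have hprod (F : Finset σ) :
      (∏ i ∈ F, X i : MvPolynomial σ R) = monomial (∑ i ∈ F, Finsupp.single i 1) 1 :=
    (monomial_sum_one F _).symm
  simp only [hprod]
  rw [← Set.image_image (fun m => monomial m (1 : R)), mem_ideal_span_monomial_image]
  simp only [Set.exists_mem_image, sum_single_one_le_iff]

end MonomialIdeals

section Complexes

variable {n : ℕ} {Δ : Set (Finset (Fin n))} {F : Finset (Fin n)} {v : Fin n}

theorem IsComplex.isLowerSet (hΔ : IsComplex Δ) : IsLowerSet Δ :=
  fun F G hGF hF => hΔ.2 F hF G hGF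

theorem isLowerSet_delC (hΔ : IsLowerSet Δ) (v : Fin n) : IsLowerSet (delC Δ v) :=
  fun _ _ hGF hF => ⟨hΔ hGF hF.1, fun hv => hF.2 (hGF hv)⟩

theorem exists_isFacet_superset (hF : F ∈ Δ) : ∃ G, IsFacet Δ G ∧ F ⊆ G := by
  obtain ⟨G, hFG, hG⟩ := Δ.toFinite.exists_le_maximal hF
  exact ⟨G, ⟨hG.prop, fun H hH hGH => (hG.eq_of_le hH hGH).symm⟩, hFG⟩

theorem IsFacet.isFacet_delC (hF : IsFacet Δ F) (hv : v ∉ F) : IsFacet (delC Δ v) F :=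
  ⟨⟨hF.1, hv⟩, fun G hG => hF.2 G hG.1⟩

theorem isSheddingVertex_iff_setOf_isFacet_delC_eq (hv : {v} ∈ Δ) :
    IsSheddingVertex Δ v ↔ {F | IsFacet (delC Δ v) F} = {F | IsFacet Δ F ∧ v ∉ F} := by
  rw [IsSheddingVertex, and_iff_right hv, Set.ext_iff]
  exact forall_congr' fun F =>
    ⟨fun h => ⟨fun hF => ⟨h hF, hF.1.2⟩, fun hF => hF.1.isFacet_delC hF.2⟩, fun h hF => (h.1 hF).1⟩

end Complexes

section StanleyReisner

variable {n : ℕ} {K : Type} [Field K] {Δ : Set (Finset (Fin n))} {F G : Finset (Fin n)} {v : Fin n}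

theorem isPrime_facePrime (F : Finset (Fin n)) : (facePrime n K F).IsPrime :=
  isPrime_span_X_image _

theorem mem_facePrime {p : MvPolynomial (Fin n) K} :
    p ∈ facePrime n K F ↔ ∀ m ∈ p.support, ¬ m.support ⊆ F := by
  simp only [facePrime, mem_ideal_span_X_image, Finset.not_subset, Finsupp.mem_support_iff,
    Set.mem_ofPred_eq, and_comm]

theorem X_mem_facePrime : (X v : MvPolynomial (Fin n) K) ∈ facePrime n K F ↔ v ∉ F := by
  simp [mem_facePrime, support_X]

theorem facePrime_le_facePrime : facePrime n K F ≤ facePrime n K G ↔ G ⊆ F := by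
  refine ⟨fun h i hiG => ?_, fun h => Ideal.span_mono (Set.image_mono fun i hi => mt (@h i) hi)⟩
  by_contra hiF
  exact X_mem_facePrime.1 (h (X_mem_facePrime.2 hiF)) hiG

theorem facePrime_injective : Function.Injective (facePrime n K) := fun _ _ h =>
  (facePrime_le_facePrime.1 h.ge).antisymm (facePrime_le_facePrime.1 h.le)

theorem SRIdeal_eq_span_prod_X_image :
    SRIdeal n K Δ = Ideal.span ((fun F : Finset (Fin n) => ∏ i ∈ F, X i) '' Δᶜ) := by
  simp only [SRIdeal, Set.image, Set.mem_compl_iff, eq_comm]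

theorem mem_SRIdeal (hΔ : IsLowerSet Δ) {p : MvPolynomial (Fin n) K} :
    p ∈ SRIdeal n K Δ ↔ ∀ m ∈ p.support, m.support ∉ Δ := by
  rw [SRIdeal_eq_span_prod_X_image, mem_span_prod_X_image]
  exact forall₂_congr fun m _ =>
    ⟨fun ⟨F, hF, hFm⟩ hm => hF (hΔ hFm hm), fun hm => ⟨m.support, hm, subset_rfl⟩⟩

theorem SRIdeal_eq_sInf_facePrime (hΔ : IsLowerSet Δ) :
    SRIdeal n K Δ = sInf (facePrime n K '' {F | IsFacet Δ F}) := by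
  ext p
  simp only [mem_SRIdeal hΔ, Ideal.mem_sInf, Set.forall_mem_image, Set.mem_ofPred_eq, mem_facePrime]
  constructor
  · intro h F hF m hm hmF
    exact h m hm (hΔ hmF hF.1)
  · intro h m hm hmΔ
    obtain ⟨F, hF, hmF⟩ := exists_isFacet_superset hmΔ
    exact h hF m hm hmF

theorem associatedPrimes_SRIdeal (hΔ : IsLowerSet Δ) :
    associatedPrimes (MvPolynomial (Fin n) K) (MvPolynomial (Fin n) K ⧸ SRIdeal n K Δ) =
      facePrime n K '' {F | IsFacet Δ F} := by
  rw [SRIdeal_eq_sInf_facePrime hΔ]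
  apply associatedPrimes_quotient_sInf (Set.toFinite _)
  · rintro _ ⟨F, -, rfl⟩
    exact isPrime_facePrime F
  · rintro _ ⟨F, hF, rfl⟩ _ ⟨G, hG, rfl⟩ hne hle
    exact hne (congrArg _ (hG.2 F hF.1 (facePrime_le_facePrime.1 hle)))

theorem SRIdeal_add_span_X (Δ : Set (Finset (Fin n))) (v : Fin n) :
    SRIdeal n K Δ + Ideal.span {X v} = SRIdeal n K (delC Δ v) := by
  apply le_antisymm
  · refine sup_le (Ideal.span_mono ?_) ?_
    · rintro _ ⟨F, hF, rfl⟩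
      exact ⟨F, fun h => hF h.1, rfl⟩
    · rw [Ideal.span_singleton_le_iff_mem]
      exact Ideal.subset_span
        ⟨{v}, fun h => h.2 (Finset.mem_singleton_self v), (Finset.prod_singleton X v).symm⟩
  · refine Ideal.span_le.2 ?_
    rintro _ ⟨F, hF, rfl⟩
    by_cases hv : v ∈ F
    · exact Ideal.mem_sup_right (Ideal.mem_span_singleton.2 (Finset.dvd_prod_of_mem X hv))
    · exact Ideal.mem_sup_left (Ideal.subset_span ⟨F, fun h => hF ⟨h, hv⟩, rfl⟩)

theorem sep_X_mem_image_facePrime (𝓕 : Set (Finset (Fin n))) (v : Fin n) :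
    {𝔭 ∈ facePrime n K '' 𝓕 | X v ∈ 𝔭} = facePrime n K '' {F ∈ 𝓕 | v ∉ F} := by
  ext 𝔭
  constructor
  · rintro ⟨⟨F, hF, rfl⟩, hv⟩
    exact ⟨F, ⟨hF, X_mem_facePrime.1 hv⟩, rfl⟩
  · rintro ⟨F, ⟨hF, hv⟩, rfl⟩
    exact ⟨⟨F, hF, rfl⟩, X_mem_facePrime.2 hv⟩

end StanleyReisner

/-- A vertex `v` of a simplicial complex `Δ` on `[n]` is a shedding vertex iff the
associated primes of `I_Δ + (x_v)` are exactly the associated primes of `I_Δ`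
containing `x_v`. -/
theorem statement_0 (n : ℕ) (K : Type) [Field K] (Δ : Set (Finset (Fin n)))
    (hΔ : IsComplex Δ) (hvert : ∀ u : Fin n, {u} ∈ Δ) (v : Fin n) :
    IsSheddingVertex Δ v ↔
      associatedPrimes (MvPolynomial (Fin n) K)
          (MvPolynomial (Fin n) K ⧸ (SRIdeal n K Δ + Ideal.span {(X v : MvPolynomial (Fin n) K)})) =
        {𝔭 ∈ associatedPrimes (MvPolynomial (Fin n) K) (MvPolynomial (Fin n) K ⧸ SRIdeal n K Δ) |
          (X v : MvPolynomial (Fin n) K) ∈ 𝔭} := by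
  rw [isSheddingVertex_iff_setOf_isFacet_delC_eq (hvert v), SRIdeal_add_span_X,
    associatedPrimes_SRIdeal (isLowerSet_delC hΔ.isLowerSet v),
    associatedPrimes_SRIdeal hΔ.isLowerSet, sep_X_mem_image_facePrime,
    facePrime_injective.image_injective.eq_iff]
  rfl

end Paper
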